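/- Let G be a Borel probability measure on ℝ, let α ∈ (0,1), let φ(x) = (2π)^{−1/2} exp(−x²/2), and define f(z) = ∫_{ℝ} φ(z − ν) dG(ν). If f′(z) = −α z f(z) for all z ∈ ℝ (equivalently, the posterior mean z + f′(z)/f(z) equals (1 − α)z for all z), then G is the Gaussian measure N(0, (1 − α)/α). -/

import Mathlib

open Real MeasureTheory ProbabilityTheory

/-! The marginal law of `Z = ν + ε` is `G ∗ N(0, v)`, with density the Gaussian smoothing `f` of
`G`. The linear score equation is a first-order linear ODE for `f`, so `f` is a multiple of
`exp (-α (z - m)² / 2)`; having mass one, the marginal law is `N(m, 1/α)`. Characteristic functions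
of Gaussians do not vanish, so the noise can be cancelled from `G ∗ N(0, v) = N(m, 1/α)`, and this
leaves `G = N(m, 1/α - v)`. -/

open scoped NNReal ENNReal

theorem conv_withDensity_eq_withDensity_lintegral_sub {E : Type*} [AddCommGroup E]
    [MeasurableSpace E] [MeasurableAdd₂ E] [MeasurableNeg E]
    (μ ν : Measure E) [SFinite μ] [SFinite ν] [ν.IsAddLeftInvariant]
    {p : E → ℝ≥0∞} (hp : Measurable p) :
    μ ∗ ν.withDensity p = ν.withDensity fun z ↦ ∫⁻ x, p (z - x) ∂μ := by
  ext s hs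
  have hind : Measurable (s.indicator (1 : E → ℝ≥0∞)) := measurable_one.indicator hs
  calc (μ ∗ ν.withDensity p) s
      = ∫⁻ x, ∫⁻ y, s.indicator 1 (x + y) ∂(ν.withDensity p) ∂μ := by
        rw [← lintegral_indicator_one hs, Measure.lintegral_conv hind]
    _ = ∫⁻ x, ∫⁻ y, p y * s.indicator 1 (x + y) ∂ν ∂μ := by
        refine lintegral_congr fun x ↦ ?_
        exact lintegral_withDensity_eq_lintegral_mul ν hp (hind.comp (measurable_const_add x))
    _ = ∫⁻ x, ∫⁻ z, p (z - x) * s.indicator 1 z ∂ν ∂μ := by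
        refine lintegral_congr fun x ↦ ?_
        simpa only [add_sub_cancel_left] using
          lintegral_add_left_eq_self (μ := ν) (fun z ↦ p (z - x) * s.indicator 1 z) x
    _ = ∫⁻ z, ∫⁻ x, p (z - x) * s.indicator 1 z ∂μ ∂ν :=
        lintegral_lintegral_swap (by fun_prop)
    _ = ∫⁻ z in s, ∫⁻ x, p (z - x) ∂μ ∂ν := by
        rw [← lintegral_indicator hs]
        refine lintegral_congr fun z ↦ ?_
        by_cases hz : z ∈ s <;> simp [hz]
    _ = ν.withDensity (fun z ↦ ∫⁻ x, p (z - x) ∂μ) s := (withDensity_apply _ hs).symm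

theorem differentiable_integral_comp_sub {E : Type*} [NormedAddCommGroup E] [NormedSpace ℝ E]
    [CompleteSpace E] {p : ℝ → E} {C : ℝ≥0} (hp : Differentiable ℝ p) (hC : LipschitzWith C p)
    {μ : Measure ℝ} [IsFiniteMeasure μ] (hint : ∀ z, Integrable (fun x ↦ p (z - x)) μ) :
    Differentiable ℝ fun z ↦ ∫ x, p (z - x) ∂μ := by
  intro z
  refine (hasDerivAt_integral_of_dominated_loc_of_lip (F' := fun x ↦ deriv p (z - x))
    (bound := fun _ ↦ C) Filter.univ_mem (.of_forall fun y ↦ (hint y).aestronglyMeasurable)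
    (hint z) ?_ (.of_forall fun x ↦ ?_) (integrable_const _)
    (.of_forall fun x ↦ (hp (z - x)).hasDerivAt.comp_sub_const z x)).2.differentiableAt
  · exact ((stronglyMeasurable_deriv p).comp_measurable
      (measurable_const.sub measurable_id)).aestronglyMeasurable
  · have hlip : LipschitzWith C fun y ↦ p (y - x) := by
      simpa only [mul_one, Function.comp_def, IsometryEquiv.subRight_apply] using
        hC.comp (IsometryEquiv.subRight x).isometry.lipschitz
    simpa only [Real.nnabs_coe] using hlip.lipschitzOnWith

theorem eq_exp_sub_smul_of_hasDerivAt {E : Type*} [NormedAddCommGroup E] [NormedSpace ℝ E]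
    {f : ℝ → E} {g g' : ℝ → ℝ} (hf : ∀ x, HasDerivAt f (g' x • f x) x)
    (hg : ∀ x, HasDerivAt g (g' x) x) (x y : ℝ) : f x = exp (g x - g y) • f y := by
  have hderiv (x : ℝ) : HasDerivAt (fun x ↦ exp (-g x) • f x) 0 x := by
    refine ((hg x).neg.exp.smul (hf x)).congr_deriv ?_
    module
  have hconst : exp (-g x) • f x = exp (-g y) • f y :=
    is_const_of_deriv_eq_zero (fun x ↦ (hderiv x).differentiableAt) (fun x ↦ (hderiv x).deriv) x y
  rw [sub_eq_add_neg, exp_add, mul_smul, ← hconst, smul_smul, ← exp_add, add_neg_cancel, exp_zero,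
    one_smul]

theorem hasDerivAt_gaussianPDFReal (m : ℝ) (v : ℝ≥0) (x : ℝ) :
    HasDerivAt (gaussianPDFReal m v) (-(x - m) / v * gaussianPDFReal m v x) x := by
  have hexponent : HasDerivAt (fun y ↦ -(y - m) ^ 2 / (2 * v)) (-(x - m) / v) x := by
    refine ((((hasDerivAt_id x).sub_const m).pow 2).neg.div_const (2 * v : ℝ)).congr_deriv ?_
    simp only [id, Nat.cast_ofNat]
    ring
  refine (hexponent.exp.const_mul (√(2 * π * v))⁻¹).congr_deriv ?_
  rw [gaussianPDFReal]
  ring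

theorem gaussianPDFReal_le (m : ℝ) (v : ℝ≥0) (x : ℝ) :
    gaussianPDFReal m v x ≤ (√(2 * π * v))⁻¹ := by
  refine mul_le_of_le_one_right (by positivity) (exp_le_one_iff.2 ?_)
  rw [neg_div]
  exact neg_nonpos.2 (by positivity)

theorem norm_deriv_gaussianPDFReal_le (m : ℝ) (v : ℝ≥0) (x : ℝ) :
    ‖deriv (gaussianPDFReal m v) x‖ ≤ (√(2 * π * v))⁻¹ * (1 / v + 1 / 2) := by
  set u : ℝ := (x - m) ^ 2 / (2 * v)
  have hlinear : |-(x - m) / v| ≤ (1 / v + 1 / 2) * (u + 1) := by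
    have hsq : |-(x - m) / v| ^ 2 = 2 * (1 / v * u) := by
      rw [sq_abs]
      ring
    have hu : 0 ≤ u := by positivity
    have hv : 0 ≤ 1 / (v : ℝ) := by positivity
    linarith [sq_nonneg (|-(x - m) / v| - 1)]
  rw [(hasDerivAt_gaussianPDFReal m v x).deriv, norm_mul,
    Real.norm_of_nonneg (gaussianPDFReal_nonneg m v x), gaussianPDFReal, mul_left_comm,
    Real.norm_eq_abs]
  gcongr
  calc |-(x - m) / v| * exp (-(x - m) ^ 2 / (2 * v))
      ≤ (1 / v + 1 / 2) * exp u * exp (-(x - m) ^ 2 / (2 * v)) := by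
        gcongr
        exact hlinear.trans (by gcongr; exact add_one_le_exp u)
    _ = 1 / v + 1 / 2 := by
        rw [mul_assoc, ← exp_add, neg_div, add_neg_cancel, exp_zero, mul_one]

theorem exists_lipschitzWith_gaussianPDFReal (m : ℝ) (v : ℝ≥0) :
    ∃ C, LipschitzWith C (gaussianPDFReal m v) :=
  ⟨⟨(√(2 * π * v))⁻¹ * (1 / v + 1 / 2), by positivity⟩, lipschitzWith_of_nnnorm_deriv_le
    (fun x ↦ (hasDerivAt_gaussianPDFReal m v x).differentiableAt)
    (norm_deriv_gaussianPDFReal_le m v)⟩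

/-- The marginal density at `z` of `Z = ν + ε`, where `ν ~ G` and `ε ~ N(0, v)` are independent.
For `v = 0` it is the zero function, as `gaussianPDFReal` is. -/
noncomputable def gaussianMarginalPDFReal (G : Measure ℝ) (v : ℝ≥0) (z : ℝ) : ℝ :=
  ∫ ν, gaussianPDFReal 0 v (z - ν) ∂G

section Marginal

variable (G : Measure ℝ) [IsFiniteMeasure G] (v : ℝ≥0)

theorem integrable_gaussianPDFReal_const_sub (m z : ℝ) :
    Integrable (fun ν ↦ gaussianPDFReal m v (z - ν)) G := by
  refine .of_bound ((measurable_gaussianPDFReal m v).comp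
    (measurable_const.sub measurable_id)).aestronglyMeasurable (√(2 * π * v))⁻¹
    (.of_forall fun ν ↦ ?_)
  rw [Real.norm_of_nonneg (gaussianPDFReal_nonneg _ _ _)]
  exact gaussianPDFReal_le _ _ _

theorem differentiable_gaussianMarginalPDFReal :
    Differentiable ℝ (gaussianMarginalPDFReal G v) := by
  obtain ⟨C, hC⟩ := exists_lipschitzWith_gaussianPDFReal 0 v
  exact differentiable_integral_comp_sub
    (fun x ↦ (hasDerivAt_gaussianPDFReal 0 v x).differentiableAt) hC
    (integrable_gaussianPDFReal_const_sub G v 0)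

variable {v} in
theorem conv_gaussianReal_eq_withDensity (hv : v ≠ 0) :
    G ∗ gaussianReal 0 v =
      volume.withDensity fun z ↦ ENNReal.ofReal (gaussianMarginalPDFReal G v z) := by
  rw [gaussianReal_of_var_ne_zero 0 hv,
    conv_withDensity_eq_withDensity_lintegral_sub G volume (measurable_gaussianPDF 0 v)]
  congr with z
  exact (ofReal_integral_eq_lintegral_ofReal (integrable_gaussianPDFReal_const_sub G v 0 z)
    (.of_forall fun ν ↦ gaussianPDFReal_nonneg 0 v (z - ν))).symm

variable {G v} in
theorem gaussianMarginalPDFReal_eq_of_linear_score {m α : ℝ}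
    (hscore : ∀ z, deriv (gaussianMarginalPDFReal G v) z =
      -α * (z - m) * gaussianMarginalPDFReal G v z) (z : ℝ) :
    gaussianMarginalPDFReal G v z =
      gaussianMarginalPDFReal G v m * exp (-(α / 2) * (z - m) ^ 2) := by
  have hode (z : ℝ) : HasDerivAt (gaussianMarginalPDFReal G v)
      ((-α * (z - m)) • gaussianMarginalPDFReal G v z) z := by
    rw [smul_eq_mul, ← hscore]
    exact (differentiable_gaussianMarginalPDFReal G v z).hasDerivAt
  have hexponent (z : ℝ) : HasDerivAt (fun z ↦ -(α / 2) * (z - m) ^ 2) (-α * (z - m)) z := by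
    refine ((((hasDerivAt_id z).sub_const m).pow 2).const_mul (-(α / 2))).congr_deriv ?_
    simp only [id, Nat.cast_ofNat]
    ring
  rw [eq_exp_sub_smul_of_hasDerivAt hode hexponent z m, smul_eq_mul, mul_comm]
  simp

end Marginal

section GaussianDensity

variable {μ : Measure ℝ} {c α m : ℝ}

theorem pos_of_eq_withDensity_mul_exp_neg_mul_sq [IsFiniteMeasure μ] [NeZero μ]
    (hμ : μ = volume.withDensity fun x ↦ ENNReal.ofReal (c * exp (-(α / 2) * (x - m) ^ 2))) :
    0 < α := by
  have hmass : ∫⁻ x, ENNReal.ofReal (c * exp (-(α / 2) * (x - m) ^ 2)) = μ Set.univ := by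
    rw [← setLIntegral_univ, ← withDensity_apply _ .univ, ← hμ]
  have hc : 0 < c := by
    by_contra! hc
    have hzero (x : ℝ) : ENNReal.ofReal (c * exp (-(α / 2) * (x - m) ^ 2)) = 0 :=
      ENNReal.ofReal_of_nonpos (mul_nonpos_of_nonpos_of_nonneg hc (exp_pos _).le)
    simp only [hzero, lintegral_zero] at hmass
    exact NeZero.ne μ (Measure.measure_univ_eq_zero.1 hmass.symm)
  have hint : Integrable fun x ↦ c * exp (-(α / 2) * (x - m) ^ 2) :=
    (lintegral_ofReal_ne_top_iff_integrable (by fun_prop)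
      (.of_forall fun x ↦ by positivity)).1 (hmass ▸ measure_ne_top μ Set.univ)
  have hcentered : Integrable fun x ↦ exp (-(α / 2) * x ^ 2) := by
    simpa [hc.ne'] using (hint.comp_add_right m).const_mul c⁻¹
  exact pos_of_mul_pos_left (integrable_exp_neg_mul_sq_iff.1 hcentered) (by norm_num)

theorem eq_gaussianReal_of_eq_withDensity_mul_exp_neg_mul_sq [IsProbabilityMeasure μ]
    (hμ : μ = volume.withDensity fun x ↦ ENNReal.ofReal (c * exp (-(α / 2) * (x - m) ^ 2))) :
    μ = gaussianReal m α⁻¹.toNNReal := by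
  have hα : 0 < α := pos_of_eq_withDensity_mul_exp_neg_mul_sq hμ
  set w : ℝ≥0 := α⁻¹.toNNReal
  have hw : (w : ℝ) = α⁻¹ := Real.coe_toNNReal _ (by positivity)
  have hw0 : w ≠ 0 := (Real.toNNReal_pos.2 (inv_pos.2 hα)).ne'
  have hdensity (x : ℝ) :
      c * exp (-(α / 2) * (x - m) ^ 2) = c * √(2 * π * w) * gaussianPDFReal m w x := by
    rw [gaussianPDFReal, mul_assoc, mul_inv_cancel_left₀ (by positivity), hw]
    congr 2
    field_simp
  have hprop : μ = ENNReal.ofReal (c * √(2 * π * w)) • gaussianReal m w := by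
    rw [gaussianReal_of_var_ne_zero m hw0, ← withDensity_smul _ (measurable_gaussianPDF m w), hμ]
    congr with x
    rw [hdensity, ENNReal.ofReal_mul' (gaussianPDFReal_nonneg m w x)]
    rfl
  have hone : ENNReal.ofReal (c * √(2 * π * w)) = 1 := by
    simpa using (congrArg (· Set.univ) hprop).symm
  rw [hprop, hone, one_smul]

end GaussianDensity

theorem conv_gaussianReal_right_cancel {μ ν : Measure ℝ} [IsFiniteMeasure μ] [IsFiniteMeasure ν]
    {m : ℝ} {v : ℝ≥0} (h : μ ∗ gaussianReal m v = ν ∗ gaussianReal m v) : μ = ν := by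
  refine Measure.ext_of_charFun (funext fun t ↦ ?_)
  have hchar := congrArg (charFun · t) h
  simp only [charFun_conv, charFun_gaussianReal] at hchar
  exact mul_right_cancel₀ (Complex.exp_ne_zero _) hchar

theorem norm_charFun_gaussianReal (m : ℝ) (v : ℝ≥0) (t : ℝ) :
    ‖charFun (gaussianReal m v) t‖ = exp (-(v * t ^ 2 / 2)) := by
  rw [charFun_gaussianReal, Complex.norm_exp]
  simp [← Complex.ofReal_pow]

section Deconvolution

variable {μ : Measure ℝ} [IsProbabilityMeasure μ] {m n : ℝ} {v w : ℝ≥0}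

theorem le_of_conv_gaussianReal_eq_gaussianReal
    (h : μ ∗ gaussianReal n v = gaussianReal m w) : v ≤ w := by
  have hnorm : exp (-(w * 1 ^ 2 / 2)) ≤ exp (-(v * 1 ^ 2 / 2) : ℝ) := by
    rw [← norm_charFun_gaussianReal m, ← norm_charFun_gaussianReal n, ← h, charFun_conv, norm_mul]
    exact mul_le_of_le_one_left (norm_nonneg _) (norm_charFun_le_one 1)
  rw [exp_le_exp] at hnorm
  exact NNReal.coe_le_coe.1 (by linarith)

theorem eq_gaussianReal_of_conv_gaussianReal_eq_gaussianReal
    (h : μ ∗ gaussianReal n v = gaussianReal m w) : μ = gaussianReal (m - n) (w - v) := by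
  refine conv_gaussianReal_right_cancel (m := n) (v := v) (h.trans ?_)
  rw [gaussianReal_conv_gaussianReal, sub_add_cancel,
    tsub_add_cancel_of_le (le_of_conv_gaussianReal_eq_gaussianReal h)]

end Deconvolution

theorem linear_posterior_mean_implies_gaussian_prior_general (G : Measure ℝ)
    [IsProbabilityMeasure G] {v : ℝ≥0} (hv : v ≠ 0) {m α : ℝ}
    (hscore : ∀ z, deriv (gaussianMarginalPDFReal G v) z =
      -α * (z - m) * gaussianMarginalPDFReal G v z) :
    0 < α ∧ v ≤ α⁻¹ ∧ G = gaussianReal m (α⁻¹ - v).toNNReal := by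
  have hdensity : G ∗ gaussianReal 0 v = volume.withDensity fun z ↦
      ENNReal.ofReal (gaussianMarginalPDFReal G v m * exp (-(α / 2) * (z - m) ^ 2)) := by
    simp only [← gaussianMarginalPDFReal_eq_of_linear_score hscore,
      conv_gaussianReal_eq_withDensity G hv]
  have hα : 0 < α := pos_of_eq_withDensity_mul_exp_neg_mul_sq hdensity
  have hmarginal : G ∗ gaussianReal 0 v = gaussianReal m α⁻¹.toNNReal :=
    eq_gaussianReal_of_eq_withDensity_mul_exp_neg_mul_sq hdensity
  have hprior : G = gaussianReal m (α⁻¹.toNNReal - v) := by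
    simpa only [sub_zero] using eq_gaussianReal_of_conv_gaussianReal_eq_gaussianReal hmarginal
  have hinv : (α⁻¹.toNNReal : ℝ) = α⁻¹ := Real.coe_toNNReal _ (by positivity)
  refine ⟨hα, ?_, ?_⟩
  · rw [← hinv]
    exact_mod_cast le_of_conv_gaussianReal_eq_gaussianReal hmarginal
  · rwa [NNReal.sub_def, hinv] at hprior

/-- Core of Proposition 1: if the marginal density `f(z) = ∫ φ(z - ν) dG(ν)` of `Z = ν + ε`
has a linear score `f'(z) = -α z f(z)` (equivalently the posterior mean `z + f'(z)/f(z)`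
equals `(1-α) z`), then the prior `G` is the Gaussian `N(0, (1-α)/α)`. -/
theorem linear_posterior_mean_implies_gaussian_prior
    (G : Measure ℝ) [IsProbabilityMeasure G]
    (α : ℝ) (hα : α ∈ Set.Ioo (0 : ℝ) 1)
    (φ f : ℝ → ℝ)
    (hφ : ∀ x, φ x = (Real.sqrt (2 * Real.pi))⁻¹ * Real.exp (-(x ^ 2) / 2))
    (hf : ∀ z, f z = ∫ ν, φ (z - ν) ∂G)
    (hode : ∀ z, deriv f z = -α * z * f z) :
    G = gaussianReal 0 (((1 - α) / α).toNNReal) := by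
  have hfG : f = gaussianMarginalPDFReal G 1 := by
    ext z
    simp [hf, hφ, gaussianMarginalPDFReal, gaussianPDFReal]
  have hprior := (linear_posterior_mean_implies_gaussian_prior_general G one_ne_zero (m := 0)
    (by simpa [← hfG] using hode)).2.2
  rwa [sub_div, one_div, div_self hα.1.ne']
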